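/- As x → ∞, the function Σ_{n ≤ x} Λ(n)/n − log x converges to −γ, where Λ is the von Mangoldt function and γ is the Euler–Mascheroni constant. -/

import Mathlib

/-!
Put `A(t) = e⁻ᵗ ∑_{n ≤ eᵗ} Λ(n)`. Abel summation gives
`∑_{n ≤ x} Λ(n)/n = A(log x) + ∫₀^{log x} A`, and the Laplace transform of `A` at `z` is the
Dirichlet series of `Λ` at `z + 1` divided by `z + 1`.

Since `ζ₁(s) = (s - 1) ζ(s)` is entire, has no zeros on `Re s ≥ 1`, and has logarithmic derivative
`γ` at `1`, the Laplace transform of the bounded function `A - 1` extends continuously to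
`Re z ≥ 0`, is differentiable at `0` and takes the value `-γ - 1` there. The Ingham–Karamata
Tauberian theorem turns this into `∫₀^T (A - 1) → -γ - 1`. As `A(t) eᵗ` is monotone, averaging `A`
over short windows then gives `A → 1` (the prime number theorem), and the two limits add up to `-γ`.

For the Tauberian theorem, subtracting a multiple of `e⁻ᵗ` reduces to a transform vanishing at `0`.
The primitive is then a Lipschitz function whose own transform extends continuously to `Re z ≥ 0`.
Convolving it with the Fourier transform `k` of a compactly supported bump produces the Fourier
integral of a compactly supported continuous function, which tends to `0` by Riemann–Lebesgue, while
the error is at most the Lipschitz constant times `∫ |t| |k(t)| dt`, which rescaling makes small.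
-/

open Filter Topology MeasureTheory Set FourierTransform SchwartzMap
open scoped ContDiff Real NNReal

section FourierKernel

lemma integral_fourier_eq_apply_zero (φ : 𝓢(ℝ, ℂ)) : ∫ t, 𝓕 φ t = φ 0 := by
  have inversion : 𝓕⁻ (𝓕 φ) 0 = φ 0 := by rw [fourierInv_fourier_eq]
  rw [← inversion, fourierInv_coe, Real.fourierInv_eq]
  simp

lemma integral_fourier_mul_eq_of_integrable {f g : ℝ → ℂ} (hf : Integrable f)
    (hg : Integrable g) : ∫ y, 𝓕 f y * g y = ∫ t, f t * 𝓕 g t := by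
  simpa using! VectorFourier.integral_fourierIntegral_smul_eq_flip (L := innerₗ ℝ)
    Real.continuous_fourierChar continuous_inner hf hg

lemma fourier_comp_div (f : ℝ → ℂ) {l : ℝ} (hl : 0 < l) (w : ℝ) :
    𝓕 (fun y ↦ f (y / l)) w = l * 𝓕 f (l * w) := by
  have scaling := Measure.integral_comp_div (fun y ↦ 𝐞 (-(y * (l * w))) • f y) l
  rw [abs_of_pos hl, Complex.real_smul] at scaling
  rw [Real.fourier_real_eq, Real.fourier_real_eq, ← scaling]
  refine integral_congr_ae (.of_forall fun y ↦ ?_)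
  simp only [← mul_assoc, div_mul_cancel₀ y hl.ne']

lemma integral_abs_mul_norm_fourier_comp_div (f : ℝ → ℂ) {l : ℝ} (hl : 0 < l) :
    ∫ t, |t| * ‖𝓕 (fun y ↦ f (y / l)) t‖ = l⁻¹ * ∫ t, |t| * ‖𝓕 f t‖ := by
  have scaling := Measure.integral_comp_mul_left (fun t ↦ |t| * ‖𝓕 f t‖) l
  rw [abs_of_pos (inv_pos.2 hl), smul_eq_mul] at scaling
  rw [← scaling]
  refine integral_congr_ae (.of_forall fun t ↦ ?_)
  simp only [fourier_comp_div f hl, norm_mul, Complex.norm_real, Real.norm_eq_abs, abs_mul]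
  ring

lemma exists_schwartzMap_integral_abs_mul_norm_fourier_lt {ε : ℝ} (hε : 0 < ε) :
    ∃ φ : 𝓢(ℝ, ℂ), HasCompactSupport φ ∧ φ 0 = 1 ∧ ∫ t, |t| * ‖𝓕 φ t‖ < ε := by
  let b : ContDiffBump (0 : ℝ) := ⟨1, 2, one_pos, one_lt_two⟩
  let f : ℝ → ℂ := fun y ↦ b y
  have hf_supp : HasCompactSupport f := b.hasCompactSupport.comp_left Complex.ofReal_zero
  have hf_smooth : ContDiff ℝ ∞ f := Complex.ofRealCLM.contDiff.comp b.contDiff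
  have moment_tendsto : Tendsto (fun l : ℝ ↦ l⁻¹ * ∫ t, |t| * ‖𝓕 f t‖) atTop (𝓝 0) := by
    simpa using tendsto_inv_atTop_zero.mul_const (∫ t, |t| * ‖𝓕 f t‖)
  obtain ⟨l, hlε, hl⟩ :=
    ((moment_tendsto.eventually_lt_const hε).and (eventually_gt_atTop 0)).exists
  have hfl_supp : HasCompactSupport fun y ↦ f (y / l) := by
    simp only [div_eq_mul_inv]
    exact hf_supp.comp_homeomorph (Homeomorph.mulRight₀ l⁻¹ (inv_ne_zero hl.ne'))
  refine ⟨hfl_supp.toSchwartzMap (hf_smooth.comp (by fun_prop)), hfl_supp, ?_, ?_⟩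
  · have : b 0 = 1 := b.one_of_mem_closedBall (by simp [b.rIn_pos.le])
    simp [f, this]
  · exact (integral_abs_mul_norm_fourier_comp_div f hl).trans_lt hlε

end FourierKernel

section Lipschitz

variable {h k : ℝ → ℂ} {K : ℝ≥0}

lemma norm_sub_mul_comp_sub_le (hh : LipschitzWith K h) (u t : ℝ) :
    ‖(h u - h t) * k (t - u)‖ ≤ K * (|t - u| * ‖k (t - u)‖) := by
  rw [norm_mul, ← mul_assoc, abs_sub_comm]
  gcongr
  exact hh.norm_sub_le u t

lemma integrable_sub_mul_comp_sub (hh : LipschitzWith K h) (hk : Integrable k)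
    (hk_moment : Integrable fun t ↦ |t| * ‖k t‖) (u : ℝ) :
    Integrable fun t ↦ (h u - h t) * k (t - u) :=
  ((hk_moment.comp_sub_right u).const_mul (K : ℝ)).mono'
    ((continuous_const.sub hh.continuous).aestronglyMeasurable.mul
      (hk.comp_sub_right u).aestronglyMeasurable)
    (.of_forall fun t ↦ norm_sub_mul_comp_sub_le hh u t)

lemma integrable_mul_comp_sub (hh : LipschitzWith K h) (hk : Integrable k)
    (hk_moment : Integrable fun t ↦ |t| * ‖k t‖) (u : ℝ) :
    Integrable fun t ↦ h t * k (t - u) := by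
  refine (((hk.comp_sub_right u).const_mul (h u)).sub
    (integrable_sub_mul_comp_sub hh hk hk_moment u)).congr (.of_forall fun t ↦ ?_)
  simp only [Pi.sub_apply]
  ring

lemma norm_sub_integral_mul_comp_sub_le (hh : LipschitzWith K h) (hk : Integrable k)
    (hk_moment : Integrable fun t ↦ |t| * ‖k t‖) (hk_one : ∫ t, k t = 1) (u : ℝ) :
    ‖h u - ∫ t, h t * k (t - u)‖ ≤ K * ∫ t, |t| * ‖k t‖ := by
  have hu : h u = ∫ t, h u * k (t - u) := by
    rw [integral_const_mul, integral_sub_right_eq_self k u, hk_one, mul_one]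
  have difference : h u - ∫ t, h t * k (t - u) = ∫ t, (h u - h t) * k (t - u) := by
    simp_rw [sub_mul]
    rw [integral_sub ((hk.comp_sub_right u).const_mul _)
      (integrable_mul_comp_sub hh hk hk_moment u), ← hu]
  rw [difference, ← integral_sub_right_eq_self (fun t ↦ |t| * ‖k t‖) u, ← integral_const_mul]
  exact norm_integral_le_of_norm_le ((hk_moment.comp_sub_right u).const_mul _)
    (.of_forall fun t ↦ norm_sub_mul_comp_sub_le hh u t)

end Lipschitz

/-- The one-sided Laplace transform `∫₀^∞ f(t) e^{-zt} dt`. It only sees the values of `f` on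
`(0, ∞)`, and is `0` where the integral does not converge absolutely. -/
noncomputable def laplaceTransform (f : ℝ → ℂ) (z : ℂ) : ℂ :=
  ∫ t in Ioi (0 : ℝ), f t * Complex.exp (-z * t)

section Laplace

variable {f : ℝ → ℂ} {z : ℂ}

lemma integrableOn_cexp_neg_mul_Ioi (hz : 0 < z.re) :
    IntegrableOn (fun t : ℝ ↦ Complex.exp (-z * t)) (Ioi 0) :=
  integrableOn_exp_mul_complex_Ioi (by simpa using hz) 0

lemma laplaceTransform_cexp_neg_mul {w : ℂ} (hzw : 0 < (z + w).re) :
    laplaceTransform (fun t ↦ Complex.exp (-w * t)) z = (z + w)⁻¹ := by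
  have exponents (t : ℝ) :
      Complex.exp (-w * t) * Complex.exp (-z * t) = Complex.exp (-(z + w) * t) := by
    rw [← Complex.exp_add]
    ring_nf
  simp only [laplaceTransform, exponents]
  rw [integral_exp_mul_complex_Ioi (by rwa [Complex.neg_re, neg_lt_zero]), Complex.ofReal_zero,
    mul_zero, Complex.exp_zero, neg_div_neg_eq, one_div]

lemma laplaceTransform_const_mul (c : ℂ) (f : ℝ → ℂ) (z : ℂ) :
    laplaceTransform (fun t ↦ c * f t) z = c * laplaceTransform f z := by
  simp only [laplaceTransform, mul_assoc, integral_const_mul]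

lemma laplaceTransform_const (c : ℂ) (hz : 0 < z.re) :
    laplaceTransform (fun _ ↦ c) z = c / z := by
  have exp_zero := laplaceTransform_cexp_neg_mul (z := z) (w := 0) (by simpa using hz)
  simp only [neg_zero, zero_mul, Complex.exp_zero, add_zero] at exp_zero
  simpa [exp_zero, div_eq_mul_inv] using laplaceTransform_const_mul c (fun _ ↦ 1) z

lemma laplaceTransform_sub {g : ℝ → ℂ}
    (hf : IntegrableOn (fun t ↦ f t * Complex.exp (-z * t)) (Ioi 0))
    (hg : IntegrableOn (fun t ↦ g t * Complex.exp (-z * t)) (Ioi 0)) :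
    laplaceTransform (fun t ↦ f t - g t) z = laplaceTransform f z - laplaceTransform g z := by
  simp only [laplaceTransform, sub_mul]
  exact integral_sub hf hg

lemma integrableOn_mul_cexp_of_norm_le {M : ℝ}
    (hf : AEStronglyMeasurable f (volume.restrict (Ioi 0))) (hM : ∀ t > 0, ‖f t‖ ≤ M)
    (hz : 0 < z.re) : IntegrableOn (fun t ↦ f t * Complex.exp (-z * t)) (Ioi 0) :=
  (integrableOn_cexp_neg_mul_Ioi hz).bdd_mul hf
    ((ae_restrict_iff' measurableSet_Ioi).2 (.of_forall hM))

lemma integrableOn_mul_cexp_of_lipschitzWith {K : ℝ≥0} (hf : LipschitzWith K f) (hf0 : f 0 = 0)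
    (hz : 0 < z.re) : IntegrableOn (fun t ↦ f t * Complex.exp (-z * t)) (Ioi 0) := by
  have gamma_integrand : IntegrableOn (fun t : ℝ ↦ K * (t * Real.exp (-z.re * t))) (Ioi 0) := by
    simpa [IntegrableOn] using (integrableOn_rpow_mul_exp_neg_mul_rpow (s := 1) (p := 1)
      (by norm_num) one_pos hz).const_mul (K : ℝ)
  refine gamma_integrand.mono' (hf.continuous.mul (by fun_prop)).aestronglyMeasurable
    ((ae_restrict_iff' measurableSet_Ioi).2 (.of_forall fun t (ht : 0 < t) ↦ ?_))
  have growth : ‖f t‖ ≤ K * t := by simpa [hf0, abs_of_pos ht] using hf.norm_sub_le t 0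
  calc ‖f t * Complex.exp (-z * t)‖ = ‖f t‖ * Real.exp (-z.re * t) := by
        simp [Complex.norm_exp]
    _ ≤ K * t * Real.exp (-z.re * t) := by gcongr
    _ = K * (t * Real.exp (-z.re * t)) := mul_assoc ..

lemma laplaceTransform_primitive (hz : 0 < z.re)
    (hf : IntegrableOn (fun t ↦ f t * Complex.exp (-z * t)) (Ioi 0)) :
    laplaceTransform (fun T ↦ ∫ s in 0..T, f s) z = laplaceTransform f z / z := by
  have convolution := integral_posConvolution hf (integrableOn_cexp_neg_mul_Ioi hz)
    (ContinuousLinearMap.mul ℝ ℂ)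
  have integrand (T : ℝ) : ∫ s in 0..T, ContinuousLinearMap.mul ℝ ℂ
      (f s * Complex.exp (-z * s)) (Complex.exp (-z * (T - s : ℝ))) =
      (∫ s in 0..T, f s) * Complex.exp (-z * T) := by
    rw [← intervalIntegral.integral_mul_const]
    refine intervalIntegral.integral_congr fun s _ ↦ ?_
    simp only [ContinuousLinearMap.mul_apply', mul_assoc, ← Complex.exp_add]
    push_cast
    ring_nf
  simp_rw [integrand, ContinuousLinearMap.mul_apply'] at convolution
  have exp_integral := laplaceTransform_const 1 hz
  simp only [laplaceTransform, one_mul] at exp_integral ⊢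
  rw [convolution, exp_integral, mul_one_div]

lemma laplaceTransform_add_two_pi_mul_I (f : ℝ → ℂ) (z : ℂ) (y : ℝ) :
    laplaceTransform f (z + (2 * π * y : ℝ) * Complex.I) =
      𝓕 ((Ioi 0).indicator fun t : ℝ ↦ f t * Complex.exp (-z * t)) y := by
  rw [laplaceTransform, Real.fourier_real_eq_integral_exp_smul,
    ← integral_indicator measurableSet_Ioi]
  refine integral_congr_ae (.of_forall fun t ↦ ?_)
  by_cases ht : t ∈ Ioi 0
  · simp only [indicator_of_mem ht, smul_eq_mul, mul_left_comm _ (f t), ← Complex.exp_add]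
    push_cast
    ring_nf
  · simp only [indicator_of_notMem ht, smul_zero]

lemma fourier_exp_mul (φ : ℝ → ℂ) (u t : ℝ) :
    𝓕 (fun y : ℝ ↦ Complex.exp ((2 * π * y * u : ℝ) * Complex.I) * φ y) t = 𝓕 φ (t - u) := by
  simp only [Real.fourier_real_eq_integral_exp_smul, smul_eq_mul, ← mul_assoc, ← Complex.exp_add]
  refine integral_congr_ae (.of_forall fun y ↦ ?_)
  push_cast
  ring_nf

lemma setIntegral_mul_cexp_mul_fourier_sub {φ : ℝ → ℂ} (hφ : Integrable φ)
    (hf : IntegrableOn (fun t ↦ f t * Complex.exp (-z * t)) (Ioi 0)) (u : ℝ) :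
    ∫ t in Ioi (0 : ℝ), f t * Complex.exp (-z * t) * 𝓕 φ (t - u) =
      𝓕⁻ (fun y : ℝ ↦ φ y * laplaceTransform f (z + (2 * π * y : ℝ) * Complex.I)) u := by
  have hφ_mod : Integrable fun y : ℝ ↦ Complex.exp ((2 * π * y * u : ℝ) * Complex.I) * φ y :=
    hφ.bdd_mul (c := 1) (by fun_prop) (.of_forall fun y ↦ (Complex.norm_exp_ofReal_mul_I _).le)
  rw [← integral_indicator measurableSet_Ioi, Real.fourierInv_eq']
  calc ∫ t, (Ioi 0).indicator (fun t : ℝ ↦ f t * Complex.exp (-z * t) * 𝓕 φ (t - u)) t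
      = ∫ t, (Ioi 0).indicator (fun t : ℝ ↦ f t * Complex.exp (-z * t)) t *
          𝓕 (fun y : ℝ ↦ Complex.exp ((2 * π * y * u : ℝ) * Complex.I) * φ y) t := by
        simp only [fourier_exp_mul, indicator_mul_left _ _ (fun t ↦ 𝓕 φ (t - u))]
    _ = ∫ y, 𝓕 ((Ioi 0).indicator fun t : ℝ ↦ f t * Complex.exp (-z * t)) y *
          (Complex.exp ((2 * π * y * u : ℝ) * Complex.I) * φ y) :=
        (integral_fourier_mul_eq_of_integrable
          ((integrable_indicator_iff measurableSet_Ioi).2 hf) hφ_mod).symm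
    _ = _ := by
        refine integral_congr_ae (.of_forall fun y ↦ ?_)
        simp only [← laplaceTransform_add_two_pi_mul_I, smul_eq_mul, RCLike.inner_apply,
          conj_trivial, mul_comm u y, mul_assoc]
        ring

end Laplace

section Tauberian

lemma tendsto_setIntegral_mul_cexp_neg_mul {g : ℝ → ℂ} (hg : IntegrableOn g (Ioi 0)) :
    Tendsto (fun ε : ℝ ↦ ∫ t in Ioi (0 : ℝ), g t * Complex.exp (-ε * t)) (𝓝[>] 0)
      (𝓝 (∫ t in Ioi 0, g t)) := by
  refine tendsto_integral_filter_of_dominated_convergence (fun t ↦ ‖g t‖) ?_ ?_ hg.norm ?_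
  · exact .of_forall fun ε ↦ hg.aestronglyMeasurable.mul (by fun_prop)
  · filter_upwards [self_mem_nhdsWithin] with ε (hε : 0 < ε)
    refine (ae_restrict_iff' measurableSet_Ioi).2 (.of_forall fun t (ht : 0 < t) ↦ ?_)
    have exp_le : ‖Complex.exp (-ε * t)‖ ≤ 1 := by
      rw [Complex.norm_exp, Real.exp_le_one_iff]
      simpa using (mul_pos hε ht).le
    rw [norm_mul]
    exact mul_le_of_le_one_right (norm_nonneg _) exp_le
  · refine .of_forall fun t ↦ tendsto_nhdsWithin_of_tendsto_nhds ?_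
    have : Continuous fun ε : ℝ ↦ g t * Complex.exp (-ε * t) := by fun_prop
    simpa using this.tendsto 0

lemma tendsto_fourierInv_mul_comp_add {φ : ℝ → ℂ} {G : ℂ → ℂ} (hφ : Continuous φ)
    (hφ_supp : HasCompactSupport φ) (hG : ContinuousOn G {z | 0 ≤ z.re}) (u : ℝ) :
    Tendsto (fun ε : ℝ ↦ 𝓕⁻ (fun y : ℝ ↦ φ y * G (ε + (2 * π * y : ℝ) * Complex.I)) u) (𝓝[>] 0)
      (𝓝 (𝓕⁻ (fun y : ℝ ↦ φ y * G ((2 * π * y : ℝ) * Complex.I)) u)) := by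
  simp only [Real.fourierInv_eq']
  have integrand_continuousOn : ContinuousOn (Function.uncurry fun ε y : ℝ ↦
      Complex.exp ((2 * π * inner ℝ y u : ℝ) * Complex.I) •
        (φ y * G (ε + (2 * π * y : ℝ) * Complex.I))) (Ici 0 ×ˢ univ) := by
    have hG_strip : ContinuousOn (fun p : ℝ × ℝ ↦ G (p.1 + (2 * π * p.2 : ℝ) * Complex.I))
        (Ici 0 ×ˢ univ) :=
      hG.comp (by fun_prop) fun p hp ↦ by simpa using hp.1
    have hφ_snd : Continuous fun p : ℝ × ℝ ↦ φ p.2 := by fun_prop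
    have hexp : Continuous fun p : ℝ × ℝ ↦
        Complex.exp ((2 * π * inner ℝ p.2 u : ℝ) * Complex.I) := by fun_prop
    exact hexp.continuousOn.smul (hφ_snd.continuousOn.mul hG_strip)
  have integral_continuousOn := continuousOn_integral_of_compact_support (μ := volume)
    hφ_supp integrand_continuousOn fun ε y _ hy ↦ by simp [image_eq_zero_of_notMem_tsupport hy]
  simpa using ((integral_continuousOn 0 self_mem_Ici).mono Ioi_subset_Ici_self).tendsto

lemma setIntegral_mul_fourier_sub_eq_fourierInv {f φ : ℝ → ℂ} {G : ℂ → ℂ}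
    (hf : ∀ z : ℂ, 0 < z.re → IntegrableOn (fun t : ℝ ↦ f t * Complex.exp (-z * t)) (Ioi 0))
    (hfG : ∀ z : ℂ, 0 < z.re → laplaceTransform f z = G z)
    (hG : ContinuousOn G {z | 0 ≤ z.re}) (hφ : Continuous φ) (hφ_supp : HasCompactSupport φ)
    {u : ℝ} (hfφ : IntegrableOn (fun t ↦ f t * 𝓕 φ (t - u)) (Ioi 0)) :
    ∫ t in Ioi 0, f t * 𝓕 φ (t - u) =
      𝓕⁻ (fun y : ℝ ↦ φ y * G ((2 * π * y : ℝ) * Complex.I)) u := by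
  have regularized : ∀ ε > (0 : ℝ),
      𝓕⁻ (fun y : ℝ ↦ φ y * G (ε + (2 * π * y : ℝ) * Complex.I)) u =
        ∫ t in Ioi (0 : ℝ), f t * 𝓕 φ (t - u) * Complex.exp (-ε * t) := by
    intro ε hε
    have on_vertical_line (y : ℝ) : G (ε + (2 * π * y : ℝ) * Complex.I) =
        laplaceTransform f (ε + (2 * π * y : ℝ) * Complex.I) :=
      (hfG _ (by simpa using hε)).symm
    simp only [on_vertical_line, mul_right_comm _ (𝓕 φ _)]
    exact (setIntegral_mul_cexp_mul_fourier_sub (hφ.integrable_of_hasCompactSupport hφ_supp)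
      (hf ε (by simpa using hε)) u).symm
  refine tendsto_nhds_unique (tendsto_setIntegral_mul_cexp_neg_mul hfφ)
    ((tendsto_fourierInv_mul_comp_add hφ hφ_supp hG u).congr' ?_)
  filter_upwards [self_mem_nhdsWithin] with ε hε using regularized ε hε

lemma tendsto_fourierInv_atTop {E : Type*} [NormedAddCommGroup E] [NormedSpace ℂ E] (f : ℝ → E) :
    Tendsto (𝓕⁻ f) atTop (𝓝 0) := by
  rw [show 𝓕⁻ f = 𝓕 f ∘ Neg.neg from funext fun u ↦ Real.fourierInv_eq_fourier_neg f u]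
  exact (Real.zero_at_infty_fourier f).comp
    (tendsto_neg_atTop_atBot.mono_right atBot_le_cocompact)

theorem tendsto_zero_of_lipschitzWith_of_laplaceTransform_eqOn {f : ℝ → ℂ} {K : ℝ≥0} {G : ℂ → ℂ}
    (hf : LipschitzWith K f) (hf0 : ∀ t ≤ 0, f t = 0)
    (hfG : ∀ z : ℂ, 0 < z.re → laplaceTransform f z = G z)
    (hG : ContinuousOn G {z | 0 ≤ z.re}) : Tendsto f atTop (𝓝 0) := by
  rw [Metric.tendsto_nhds]
  intro ε hε
  obtain ⟨φ, hφ_supp, hφ_zero, hφ_moment⟩ :=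
    exists_schwartzMap_integral_abs_mul_norm_fourier_lt (ε := ε / 2 / (K + 1)) (by positivity)
  have kernel_integrable : Integrable fun t ↦ 𝓕 φ t := (𝓕 φ).integrable
  have moment_integrable : Integrable fun t ↦ |t| * ‖𝓕 φ t‖ := by
    simpa only [pow_one, Real.norm_eq_abs] using
      (𝓕 φ : 𝓢(ℝ, ℂ)).integrable_pow_mul volume 1
  have kernel_mass : ∫ t, 𝓕 φ t = 1 := by rw [integral_fourier_eq_apply_zero, hφ_zero]
  have smoothing_error (u : ℝ) : ‖f u - ∫ t, f t * 𝓕 φ (t - u)‖ < ε / 2 :=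
    calc _ ≤ K * ∫ t, |t| * ‖𝓕 φ t‖ :=
          norm_sub_integral_mul_comp_sub_le hf kernel_integrable moment_integrable kernel_mass u
      _ ≤ (K + 1) * ∫ t, |t| * ‖𝓕 φ t‖ := by gcongr; linarith
      _ < ε / 2 := by rwa [lt_div_iff₀' (by positivity)] at hφ_moment
  have smoothed_eq (u : ℝ) : ∫ t, f t * 𝓕 φ (t - u) =
      𝓕⁻ (fun y : ℝ ↦ φ y * G ((2 * π * y : ℝ) * Complex.I)) u := by
    rw [← setIntegral_eq_integral_of_forall_compl_eq_zero (s := Ioi 0)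
      fun t ht ↦ by rw [hf0 t (by simpa using ht), zero_mul]]
    exact setIntegral_mul_fourier_sub_eq_fourierInv
      (fun z hz ↦ integrableOn_mul_cexp_of_lipschitzWith hf (hf0 0 le_rfl) hz) hfG hG
      φ.continuous hφ_supp
      (integrable_mul_comp_sub hf kernel_integrable moment_integrable u).integrableOn
  have smoothed_small := Metric.tendsto_nhds.1 (tendsto_fourierInv_atTop
    fun y : ℝ ↦ φ y * G ((2 * π * y : ℝ) * Complex.I)) (ε / 2) (half_pos hε)
  filter_upwards [smoothed_small] with u hu
  rw [dist_zero_right] at hu ⊢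
  calc ‖f u‖ ≤ ‖f u - ∫ t, f t * 𝓕 φ (t - u)‖ + ‖∫ t, f t * 𝓕 φ (t - u)‖ := norm_le_norm_sub_add _ _
    _ < ε / 2 + ε / 2 := add_lt_add (smoothing_error u) (by rwa [smoothed_eq])
    _ = ε := add_halves ε

lemma lipschitzWith_integral_of_norm_le {E : Type*} [NormedAddCommGroup E] [NormedSpace ℝ E]
    {f : ℝ → E} {M : ℝ≥0} (hf : AEStronglyMeasurable f) (hM : ∀ t, ‖f t‖ ≤ M) (a : ℝ) :
    LipschitzWith M fun T ↦ ∫ s in a..T, f s := by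
  have integrable (b c : ℝ) : IntervalIntegrable f volume b c :=
    (intervalIntegrable_const (c := (M : ℝ))).mono_fun hf.restrict
      (.of_forall fun t ↦ by simpa using hM t)
  refine LipschitzWith.of_dist_le_mul fun T T' ↦ ?_
  rw [dist_eq_norm, Real.dist_eq,
    intervalIntegral.integral_interval_sub_left (integrable _ _) (integrable _ _)]
  exact intervalIntegral.norm_integral_le_of_norm_le_const fun t _ ↦ hM t

lemma continuousOn_dslope_of_differentiableAt {𝕜 E : Type*} [NontriviallyNormedField 𝕜]
    [NormedAddCommGroup E] [NormedSpace 𝕜 E] {f : 𝕜 → E} {s : Set 𝕜} {a : 𝕜}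
    (hf : ContinuousOn f s) (hfa : DifferentiableAt 𝕜 f a) : ContinuousOn (dslope f a) s := by
  intro x hx
  rcases eq_or_ne x a with rfl | hxa
  · exact (continuousAt_dslope_same.2 hfa).continuousWithinAt
  · exact (continuousWithinAt_dslope_of_ne hxa).2 (hf x hx)

lemma tendsto_integral_zero_of_laplaceTransform_eqOn {f : ℝ → ℂ} {M : ℝ} {G : ℂ → ℂ}
    (hf : AEStronglyMeasurable f (volume.restrict (Ioi 0))) (hM : ∀ t > 0, ‖f t‖ ≤ M)
    (hfG : ∀ z : ℂ, 0 < z.re → laplaceTransform f z = G z)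
    (hG : ContinuousOn G {z | 0 ≤ z.re}) (hG_diff : DifferentiableAt ℂ G 0) (hG_zero : G 0 = 0) :
    Tendsto (fun T ↦ ∫ s in 0..T, f s) atTop (𝓝 0) := by
  let f₀ : ℝ → ℂ := (Ioi 0).indicator f
  have hf₀ : AEStronglyMeasurable f₀ := (aestronglyMeasurable_indicator_iff measurableSet_Ioi).2 hf
  have hf₀_le (t : ℝ) : ‖f₀ t‖ ≤ M.toNNReal := by
    rw [Real.coe_toNNReal', norm_indicator_eq_indicator_norm]
    exact indicator_le' (fun t ht ↦ (hM t ht).trans (le_max_left M 0))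
      (fun _ _ ↦ le_max_right M 0) t
  have primitive_of_nonpos : ∀ T ≤ 0, ∫ s in 0..T, f₀ s = 0 := by
    intro T hT
    rw [intervalIntegral.integral_of_ge hT, setIntegral_indicator measurableSet_Ioi]
    simp
  have primitive_of_nonneg : ∀ T ≥ 0, ∫ s in 0..T, f₀ s = ∫ s in 0..T, f s := by
    intro T hT
    rw [intervalIntegral.integral_of_le hT, intervalIntegral.integral_of_le hT]
    exact setIntegral_congr_fun measurableSet_Ioc fun s hs ↦ indicator_of_mem (mem_Ioi.2 hs.1) f
  have laplace_f₀ (z : ℂ) : laplaceTransform f₀ z = laplaceTransform f z :=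
    setIntegral_congr_fun measurableSet_Ioi fun t ht ↦ by simp only [f₀, indicator_of_mem ht]
  have laplace_primitive (z : ℂ) (hz : 0 < z.re) :
      laplaceTransform (fun T ↦ ∫ s in 0..T, f₀ s) z = dslope G 0 z := by
    have hz0 : z ≠ 0 := by rintro rfl; simp at hz
    rw [laplaceTransform_primitive hz (integrableOn_mul_cexp_of_norm_le hf₀.restrict
      (fun t _ ↦ hf₀_le t) hz), laplace_f₀, hfG z hz, dslope_of_ne _ hz0, slope_def_field,
      hG_zero, sub_zero, sub_zero]
  refine (tendsto_zero_of_lipschitzWith_of_laplaceTransform_eqOn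
    (lipschitzWith_integral_of_norm_le hf₀ hf₀_le 0) primitive_of_nonpos laplace_primitive
    (continuousOn_dslope_of_differentiableAt hG hG_diff)).congr' ?_
  filter_upwards [eventually_ge_atTop 0] with T hT using primitive_of_nonneg T hT

lemma tendsto_integral_const_mul_cexp_neg (c : ℂ) :
    Tendsto (fun T : ℝ ↦ ∫ s in 0..T, c * Complex.exp (-1 * s)) atTop (𝓝 c) := by
  have total : ∫ t in Ioi (0 : ℝ), c * Complex.exp (-1 * t) = c := by
    simpa only [laplaceTransform, div_one] using laplaceTransform_const c (z := 1) (by simp)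
  have integrable := (integrableOn_cexp_neg_mul_Ioi (z := 1) (by simp)).const_mul c
  simpa only [total, id] using intervalIntegral_tendsto_integral_Ioi 0 integrable tendsto_id

theorem tendsto_integral_of_laplaceTransform_eqOn {f : ℝ → ℂ} {M : ℝ} {G : ℂ → ℂ}
    (hf : AEStronglyMeasurable f (volume.restrict (Ioi 0))) (hM : ∀ t > 0, ‖f t‖ ≤ M)
    (hfG : ∀ z : ℂ, 0 < z.re → laplaceTransform f z = G z)
    (hG : ContinuousOn G {z | 0 ≤ z.re}) (hG_diff : DifferentiableAt ℂ G 0) :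
    Tendsto (fun T ↦ ∫ s in 0..T, f s) atTop (𝓝 (G 0)) := by
  let e : ℝ → ℂ := fun t ↦ G 0 * Complex.exp (-1 * t)
  have he : Continuous e := by fun_prop
  have he_le : ∀ t > 0, ‖e t‖ ≤ ‖G 0‖ := fun t ht ↦ by
    rw [norm_mul, Complex.norm_exp]
    refine mul_le_of_le_one_right (norm_nonneg _) (Real.exp_le_one_iff.2 ?_)
    simpa using ht.le
  have laplace_sub (z : ℂ) (hz : 0 < z.re) :
      laplaceTransform (fun t ↦ f t - e t) z = G z - G 0 * (z + 1)⁻¹ := by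
    have hz1 : 0 < (z + 1).re := by rw [Complex.add_re, Complex.one_re]; linarith
    rw [laplaceTransform_sub (integrableOn_mul_cexp_of_norm_le hf hM hz)
      (integrableOn_mul_cexp_of_norm_le he.aestronglyMeasurable he_le hz), hfG z hz,
      laplaceTransform_const_mul, laplaceTransform_cexp_neg_mul hz1]
  have transform_continuousOn : ContinuousOn (fun z ↦ G z - G 0 * (z + 1)⁻¹) {z | 0 ≤ z.re} := by
    refine hG.sub (continuousOn_const.mul (ContinuousOn.inv₀ (by fun_prop) fun z hz ↦ ?_))
    exact Complex.ne_zero_of_re_pos (by rw [Complex.add_re, Complex.one_re]; linarith [hz.out])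
  have difference := tendsto_integral_zero_of_laplaceTransform_eqOn (f := fun t ↦ f t - e t)
    (hf.sub he.aestronglyMeasurable)
    (fun t ht ↦ (norm_sub_le _ _).trans (add_le_add (hM t ht) (he_le t ht)))
    laplace_sub transform_continuousOn (hG_diff.sub (by fun_prop (disch := simp))) (by simp)
  have sum := difference.add (tendsto_integral_const_mul_cexp_neg (G 0))
  rw [zero_add] at sum
  refine sum.congr' ?_
  filter_upwards [eventually_ge_atTop 0] with T hT
  have f_integrable : IntervalIntegrable f volume 0 T := by
    rw [intervalIntegrable_iff_integrableOn_Ioc_of_le hT]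
    exact .of_bound measure_Ioc_lt_top (hf.mono_set Ioc_subset_Ioi_self) M
      ((ae_restrict_iff' measurableSet_Ioc).2 (.of_forall fun t ht ↦ hM t ht.1))
  rw [intervalIntegral.integral_sub f_integrable (he.intervalIntegrable 0 T), sub_add_cancel]

end Tauberian

section MonotoneTauberian

variable {A : ℝ → ℝ}

lemma intervalIntegrable_of_monotone_mul_exp (hA : Monotone fun t ↦ A t * Real.exp t) (a b : ℝ) :
    IntervalIntegrable A volume a b := by
  refine (hA.intervalIntegrable.mul_continuousOn (g := fun t ↦ Real.exp (-t))
    (by fun_prop)).congr fun t _ ↦ ?_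
  simp only [mul_assoc, ← Real.exp_add, add_neg_cancel, Real.exp_zero, mul_one]

/-- Both signs of `δ` matter: dividing by `1 - exp (-δ)` bounds `A t` above for `δ > 0` and below
for `δ < 0`. -/
lemma mul_one_sub_exp_neg_le_integral (hA : Monotone fun t ↦ A t * Real.exp t) (t δ : ℝ) :
    A t * (1 - Real.exp (-δ)) ≤ ∫ s in t..(t + δ), A s := by
  have model : ∫ s in t..(t + δ), A t * Real.exp (t - s) = A t * (1 - Real.exp (-δ)) := by
    rw [intervalIntegral.integral_const_mul,
      intervalIntegral.integral_comp_sub_left (fun x ↦ Real.exp x), integral_exp]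
    simp
  have shift (s : ℝ) : A s - A t * Real.exp (t - s) =
      (A s * Real.exp s - A t * Real.exp t) * Real.exp (-s) := by
    rw [sub_eq_add_neg t s, Real.exp_add, sub_mul, mul_assoc (A s), ← Real.exp_add s,
      add_neg_cancel, Real.exp_zero]
    ring
  rw [← model, ← sub_nonneg, ← intervalIntegral.integral_sub
    (intervalIntegrable_of_monotone_mul_exp hA _ _)
    (Continuous.intervalIntegrable (by fun_prop) _ _)]
  simp only [shift]
  rcases le_total 0 δ with hδ | hδ
  · refine intervalIntegral.integral_nonneg (by linarith) fun s hs ↦ ?_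
    exact mul_nonneg (sub_nonneg.2 (hA hs.1)) (Real.exp_pos _).le
  · rw [intervalIntegral.integral_symm, ← intervalIntegral.integral_neg]
    refine intervalIntegral.integral_nonneg (by linarith) fun s hs ↦ ?_
    rw [← neg_mul, neg_sub]
    exact mul_nonneg (sub_nonneg.2 (hA hs.2)) (Real.exp_pos _).le

lemma tendsto_integral_add_right {c L : ℝ} (hA : ∀ a b, IntervalIntegrable A volume a b)
    (hL : Tendsto (fun T ↦ (∫ s in 0..T, A s) - c * T) atTop (𝓝 L)) (δ : ℝ) :
    Tendsto (fun t ↦ ∫ s in t..(t + δ), A s) atTop (𝓝 (c * δ)) := by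
  have difference := ((hL.comp (tendsto_atTop_add_const_right atTop δ tendsto_id)).sub hL).add_const
    (c * δ)
  rw [sub_self, zero_add] at difference
  refine difference.congr fun t ↦ ?_
  rw [← intervalIntegral.integral_interval_sub_left (hA 0 _) (hA 0 t)]
  simp only [Function.comp_apply, id]
  ring

lemma tendsto_mul_div_one_sub_exp_neg (c : ℝ) :
    Tendsto (fun δ ↦ c * δ / (1 - Real.exp (-δ))) (𝓝[≠] 0) (𝓝 c) := by
  have derivative : HasDerivAt (fun δ ↦ 1 - Real.exp (-δ)) 1 0 := by
    simpa using ((hasDerivAt_neg (0 : ℝ)).exp).const_sub 1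
  have slope_inv := (hasDerivAt_iff_tendsto_slope.1 derivative).inv₀ one_ne_zero
  rw [inv_one] at slope_inv
  simpa [slope_def_field, mul_div_assoc] using slope_inv.const_mul c

theorem tendsto_of_monotone_mul_exp {c L : ℝ} (hA : Monotone fun t ↦ A t * Real.exp t)
    (hL : Tendsto (fun T ↦ (∫ s in 0..T, A s) - c * T) atTop (𝓝 L)) :
    Tendsto A atTop (𝓝 c) := by
  have window := tendsto_integral_add_right (intervalIntegrable_of_monotone_mul_exp hA) hL
  have quotient (δ : ℝ) := (window δ).div_const (1 - Real.exp (-δ))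
  have ratio_tendsto := tendsto_mul_div_one_sub_exp_neg c
  refine tendsto_order.2 ⟨fun b hb ↦ ?_, fun b hb ↦ ?_⟩
  · obtain ⟨δ, hbδ, hδ : δ < 0⟩ :=
      (((ratio_tendsto.mono_left (nhdsLT_le_nhdsNE 0)).eventually_const_lt hb).and
        self_mem_nhdsWithin).exists
    filter_upwards [(quotient δ).eventually_const_lt hbδ] with t ht
    have denominator_neg : 1 - Real.exp (-δ) < 0 := by simpa using hδ
    exact ht.trans_le ((div_le_iff_of_neg denominator_neg).2
      (mul_one_sub_exp_neg_le_integral hA t δ))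
  · obtain ⟨δ, hbδ, hδ : 0 < δ⟩ :=
      (((ratio_tendsto.mono_left (nhdsGT_le_nhdsNE 0)).eventually_lt_const hb).and
        self_mem_nhdsWithin).exists
    filter_upwards [(quotient δ).eventually_lt_const hbδ] with t ht
    have denominator_pos : 0 < 1 - Real.exp (-δ) := by simpa using hδ
    exact ((le_div_iff₀ denominator_pos).2 (mul_one_sub_exp_neg_le_integral hA t δ)).trans_lt ht

end MonotoneTauberian

section DirichletSeries

/-- The mean `x⁻¹ ∑_{n ≤ x} a n` of an arithmetic function on the logarithmic scale `x = exp t`;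
its Laplace transform is the Dirichlet series of `a`, up to a shift and a factor. -/
noncomputable def logScaleMean (a : ArithmeticFunction ℝ) (t : ℝ) : ℝ :=
  (∑ n ∈ Finset.Icc 0 ⌊Real.exp t⌋₊, a n) * Real.exp (-t)

variable {a : ArithmeticFunction ℝ} {C c : ℝ}

lemma logScaleMean_mul_exp (a : ArithmeticFunction ℝ) (t : ℝ) :
    logScaleMean a t * Real.exp t = ∑ n ∈ Finset.Icc 0 ⌊Real.exp t⌋₊, a n := by
  rw [logScaleMean, mul_assoc, ← Real.exp_add, neg_add_cancel, Real.exp_zero, mul_one]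

lemma monotone_logScaleMean_mul_exp (ha : ∀ n, 0 ≤ a n) :
    Monotone fun t ↦ logScaleMean a t * Real.exp t := by
  intro s t hst
  simp only [logScaleMean_mul_exp]
  have floor_le : ⌊Real.exp s⌋₊ ≤ ⌊Real.exp t⌋₊ := Nat.floor_le_floor (Real.exp_le_exp.2 hst)
  exact Finset.sum_le_sum_of_subset_of_nonneg (Finset.Icc_subset_Icc_right floor_le)
    fun n _ _ ↦ ha n

lemma measurable_logScaleMean (a : ArithmeticFunction ℝ) : Measurable (logScaleMean a) :=
  ((measurable_from_nat (f := fun N ↦ ∑ n ∈ Finset.Icc 0 N, a n)).comp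
    (Nat.measurable_floor.comp Real.measurable_exp)).mul (by fun_prop)

lemma logScaleMean_nonneg (ha : ∀ n, 0 ≤ a n) (t : ℝ) : 0 ≤ logScaleMean a t :=
  mul_nonneg (Finset.sum_nonneg fun n _ ↦ ha n) (Real.exp_pos _).le

lemma logScaleMean_le (ha : ∀ n, 0 ≤ a n) (hC : ∀ N : ℕ, ∑ n ∈ Finset.Icc 0 N, a n ≤ C * N)
    (t : ℝ) : logScaleMean a t ≤ C := by
  have hC0 : 0 ≤ C := by simpa using (Finset.sum_nonneg fun n _ ↦ ha n).trans (hC 1)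
  refine le_of_mul_le_mul_right ?_ (Real.exp_pos t)
  calc logScaleMean a t * Real.exp t ≤ C * ⌊Real.exp t⌋₊ :=
        (logScaleMean_mul_exp a t).trans_le (hC _)
    _ ≤ C * Real.exp t := by gcongr; exact Nat.floor_le (Real.exp_pos t).le

lemma norm_ofReal_logScaleMean_le (ha : ∀ n, 0 ≤ a n)
    (hC : ∀ N : ℕ, ∑ n ∈ Finset.Icc 0 N, a n ≤ C * N) (t : ℝ) :
    ‖(logScaleMean a t : ℂ)‖ ≤ C := by
  rw [Complex.norm_of_nonneg (logScaleMean_nonneg ha t)]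
  exact logScaleMean_le ha hC t

lemma laplaceTransform_logScaleMean (ha : ∀ n, 0 ≤ a n)
    (hC : ∀ N : ℕ, ∑ n ∈ Finset.Icc 0 N, a n ≤ C * N) {z : ℂ} (hz : 0 < z.re) :
    laplaceTransform (fun t ↦ logScaleMean a t) z = LSeries (fun n ↦ a n) (z + 1) / (z + 1) := by
  have hz1 : 1 < (z + 1).re := by simpa using hz
  have sum_Icc_one (N : ℕ) : ∑ n ∈ Finset.Icc 1 N, a n = ∑ n ∈ Finset.Icc 0 N, a n :=
    Finset.sum_subset (Finset.Icc_subset_Icc_left zero_le_one) fun n _ hn ↦ by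
      obtain rfl : n = 0 := by grind
      exact a.map_zero
  have growth : (fun N : ℕ ↦ ∑ n ∈ Finset.Icc 1 N, a n) =O[atTop] fun N ↦ (N : ℝ) ^ (1 : ℝ) := by
    refine .of_bound C (.of_forall fun N ↦ ?_)
    rw [Real.rpow_one, sum_Icc_one, Real.norm_of_nonneg (Finset.sum_nonneg fun n _ ↦ ha n),
      Real.norm_natCast]
    exact hC N
  have integrand (t : ℝ) : (logScaleMean a t : ℂ) * Complex.exp (-z * t) = Real.exp t •
      ((∑ n ∈ Finset.Icc 1 ⌊Real.exp t⌋₊, (a n : ℂ)) * (Real.exp t : ℂ) ^ (-(z + 1 + 1))) := by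
    rw [← Complex.ofReal_sum, sum_Icc_one, ← logScaleMean_mul_exp, Complex.cpow_def_of_ne_zero
      (by exact_mod_cast (Real.exp_pos t).ne'), ← Complex.ofReal_log (Real.exp_pos t).le,
      Real.log_exp, Complex.real_smul]
    push_cast
    rw [mul_assoc, mul_left_comm, ← Complex.exp_add, ← Complex.exp_add]
    ring_nf
  have substitution := integral_image_eq_integral_deriv_smul_of_monotoneOn (s := Ioi 0)
    measurableSet_Ioi (fun t _ ↦ (Real.hasDerivAt_exp t).hasDerivWithinAt)
    (Real.exp_monotone.monotoneOn _)
    fun x : ℝ ↦ (∑ n ∈ Finset.Icc 1 ⌊x⌋₊, (a n : ℂ)) * (x : ℂ) ^ (-(z + 1 + 1))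
  rw [Real.image_exp_Ioi, Real.exp_zero] at substitution
  rw [LSeries_eq_mul_integral_of_nonneg _ zero_le_one hz1 growth ha, substitution,
    mul_div_cancel_left₀ _ (Complex.ne_zero_of_re_pos (zero_lt_one.trans hz1))]
  simp only [laplaceTransform, integrand]

lemma laplaceTransform_logScaleMean_sub (ha : ∀ n, 0 ≤ a n)
    (hC : ∀ N : ℕ, ∑ n ∈ Finset.Icc 0 N, a n ≤ C * N) (w : ℂ) {z : ℂ} (hz : 0 < z.re) :
    laplaceTransform (fun t ↦ logScaleMean a t - w) z =
      LSeries (fun n ↦ a n) (z + 1) / (z + 1) - w / z := by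
  rw [laplaceTransform_sub
    (integrableOn_mul_cexp_of_norm_le
      (measurable_logScaleMean a).complex_ofReal.aestronglyMeasurable
      (fun t _ ↦ norm_ofReal_logScaleMean_le ha hC t) hz)
    (integrableOn_mul_cexp_of_norm_le aestronglyMeasurable_const (fun _ _ ↦ le_rfl) hz),
    laplaceTransform_logScaleMean ha hC hz, laplaceTransform_const w hz]

lemma sum_div_eq_logScaleMean_add_integral (a : ArithmeticFunction ℝ) {x : ℝ} (hx : 1 ≤ x) :
    ∑ n ∈ Finset.Icc 0 ⌊x⌋₊, a n / n =
      logScaleMean a (Real.log x) + ∫ t in 0..Real.log x, logScaleMean a t := by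
  have hx0 : 0 < x := zero_lt_one.trans_le hx
  have abel := sum_mul_eq_sub_integral_mul₀ a (f := fun y : ℝ ↦ y⁻¹) a.map_zero x
    (fun y hy ↦ differentiableAt_inv (by linarith [hy.1])) (by
      simp only [deriv_inv']
      exact (ContinuousOn.neg (ContinuousOn.inv₀ (by fun_prop) fun y hy ↦
        pow_ne_zero 2 (by linarith [hy.1]))).integrableOn_Icc)
  have substitution := integral_image_eq_integral_deriv_smul_of_monotoneOn
    (s := Ioc 0 (Real.log x)) measurableSet_Ioc
    (fun t _ ↦ (Real.hasDerivAt_exp t).hasDerivWithinAt) (Real.exp_monotone.monotoneOn _)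
    fun y ↦ deriv (fun y : ℝ ↦ y⁻¹) y * ∑ n ∈ Finset.Icc 0 ⌊y⌋₊, a n
  have integrand (t : ℝ) : Real.exp t • (deriv (fun y : ℝ ↦ y⁻¹) (Real.exp t) *
      ∑ n ∈ Finset.Icc 0 ⌊Real.exp t⌋₊, a n) = -logScaleMean a t := by
    rw [deriv_inv, logScaleMean, Real.exp_neg, smul_eq_mul]
    field_simp
  have boundary : x⁻¹ * ∑ n ∈ Finset.Icc 0 ⌊x⌋₊, a n = logScaleMean a (Real.log x) := by
    rw [logScaleMean, Real.exp_neg, Real.exp_log hx0, mul_comm]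
  rw [Real.image_exp_Ioc, Real.exp_zero, Real.exp_log hx0] at substitution
  rw [substitution, boundary] at abel
  simp only [integrand, integral_neg, sub_neg_eq_add] at abel
  rw [intervalIntegral.integral_of_le (Real.log_nonneg hx), ← abel]
  exact Finset.sum_congr rfl fun n _ ↦ div_eq_inv_mul _ _

lemma tendsto_integral_logScaleMean_sub {g : ℂ → ℂ} (ha : ∀ n, 0 ≤ a n)
    (hC : ∀ N : ℕ, ∑ n ∈ Finset.Icc 0 N, a n ≤ C * N)
    (hag : ∀ s : ℂ, 1 < s.re → LSeries (fun n ↦ a n) s = c / (s - 1) + g s)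
    (hg : ContinuousOn g {s | 1 ≤ s.re}) (hg_diff : DifferentiableAt ℂ g 1) :
    Tendsto (fun T ↦ (∫ t in 0..T, logScaleMean a t) - c * T) atTop (𝓝 ((g 1).re - c)) := by
  have add_one_ne_zero (z : ℂ) (hz : 0 ≤ z.re) : z + 1 ≠ 0 :=
    Complex.ne_zero_of_re_pos (by rw [Complex.add_re, Complex.one_re]; linarith)
  have laplace_eq (z : ℂ) (hz : 0 < z.re) :
      laplaceTransform (fun t ↦ logScaleMean a t - c) z = (g (z + 1) - c) / (z + 1) := by
    have hz0 : z ≠ 0 := Complex.ne_zero_of_re_pos hz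
    have hz1 := add_one_ne_zero z hz.le
    rw [laplaceTransform_logScaleMean_sub ha hC _ hz, hag _ (by simpa using hz),
      add_sub_cancel_right]
    field_simp
    ring
  have limit := tendsto_integral_of_laplaceTransform_eqOn (M := C + ‖(c : ℂ)‖)
    ((measurable_logScaleMean a).complex_ofReal.sub_const _).aestronglyMeasurable
    (fun t _ ↦ (norm_sub_le _ _).trans (by grw [norm_ofReal_logScaleMean_le ha hC t])) laplace_eq
    (((hg.comp (by fun_prop) fun z hz ↦ by simpa using hz).sub continuousOn_const).div
      (by fun_prop) add_one_ne_zero)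
    (((differentiableAt_comp_add_const.2 (by simpa using hg_diff)).sub_const _).div
      (by fun_prop) (by simp))
  have limit_re := (Complex.continuous_re.tendsto _).comp limit
  simp only [zero_add, div_one, Complex.sub_re, Complex.ofReal_re] at limit_re
  refine limit_re.congr fun T ↦ ?_
  simp only [Function.comp_apply, ← Complex.ofReal_sub, intervalIntegral.integral_ofReal,
    Complex.ofReal_re]
  rw [intervalIntegral.integral_sub (intervalIntegrable_of_monotone_mul_exp
    (monotone_logScaleMean_mul_exp ha) 0 T) intervalIntegrable_const,
    intervalIntegral.integral_const, sub_zero, smul_eq_mul, mul_comm T]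

theorem tendsto_sum_div_sub_mul_log {g : ℂ → ℂ} (ha : ∀ n, 0 ≤ a n)
    (hC : ∀ N : ℕ, ∑ n ∈ Finset.Icc 0 N, a n ≤ C * N)
    (hag : ∀ s : ℂ, 1 < s.re → LSeries (fun n ↦ a n) s = c / (s - 1) + g s)
    (hg : ContinuousOn g {s | 1 ≤ s.re}) (hg_diff : DifferentiableAt ℂ g 1) :
    Tendsto (fun x : ℝ ↦ ∑ n ∈ Finset.Icc 0 ⌊x⌋₊, a n / n - c * Real.log x) atTop
      (𝓝 (g 1).re) := by
  have integral_tendsto := tendsto_integral_logScaleMean_sub ha hC hag hg hg_diff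
  have mean_tendsto : Tendsto (logScaleMean a) atTop (𝓝 c) :=
    tendsto_of_monotone_mul_exp (monotone_logScaleMean_mul_exp ha) integral_tendsto
  have sum_tendsto := (mean_tendsto.add integral_tendsto).comp Real.tendsto_log_atTop
  rw [add_sub_cancel] at sum_tendsto
  refine sum_tendsto.congr' ?_
  filter_upwards [eventually_ge_atTop 1] with x hx
  rw [sum_div_eq_logScaleMean_add_integral a hx, Function.comp_apply, add_sub_assoc]

end DirichletSeries

section Zeta

lemma riemannZeta₁_ne_zero_of_one_le_re {s : ℂ} (hs : 1 ≤ s.re) : riemannZeta₁ s ≠ 0 := by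
  rcases eq_or_ne s 1 with rfl | hs1
  · simp [riemannZeta₁_one]
  · have := riemannZeta_ne_zero_of_one_le_re hs
    rw [riemannZeta_eq_inv_sub_mul hs1] at this
    exact right_ne_zero_of_mul this

lemma differentiableAt_logDeriv_riemannZeta₁ {s : ℂ} (hs : 1 ≤ s.re) :
    DifferentiableAt ℂ (logDeriv riemannZeta₁) s :=
  (differentiable_riemannZeta₁.contDiff.differentiable_deriv_two s).div
    (differentiable_riemannZeta₁ s) (riemannZeta₁_ne_zero_of_one_le_re hs)

lemma logDeriv_riemannZeta₁_one :
    logDeriv riemannZeta₁ 1 = Real.eulerMascheroniConstant := by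
  rw [logDeriv_apply, deriv_riemannZeta₁_one, riemannZeta₁_one, div_one]

lemma LSeries_vonMangoldt_eq_one_div_sub_logDeriv {s : ℂ} (hs : 1 < s.re) :
    LSeries (fun n ↦ ArithmeticFunction.vonMangoldt n) s =
      1 / (s - 1) - logDeriv riemannZeta₁ s := by
  have hs1 : s ≠ 1 := by rintro rfl; simp at hs
  have hζ₁ := riemannZeta₁_ne_zero_of_one_le_re hs.le
  have hs0 : s - 1 ≠ 0 := sub_ne_zero.2 hs1
  rw [ArithmeticFunction.LSeries_vonMangoldt_eq_deriv_riemannZeta_div hs,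
    deriv_riemannZeta_eq_neg_inv_sub_sq_mul_add hs1, riemannZeta_eq_inv_sub_mul hs1, logDeriv_apply]
  field_simp
  ring

lemma sum_vonMangoldt_le (N : ℕ) :
    ∑ n ∈ Finset.Icc 0 N, ArithmeticFunction.vonMangoldt n ≤ (Real.log 4 + 4) * N := by
  simpa [Chebyshev.psi_eq_sum_Icc] using Chebyshev.psi_le_const_mul_self N.cast_nonneg

end Zeta

open ArithmeticFunction in
/-- As `x → ∞`, `∑_{n ≤ x} Λ(n)/n − log x → −γ`. -/
theorem vonMangoldt_sum_div_sub_log_tendsto_neg_gamma :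
    Filter.Tendsto
      (fun x : ℝ =>
        (∑ n ∈ Finset.range (⌊x⌋₊ + 1), ArithmeticFunction.vonMangoldt n / n)
          - Real.log x)
      Filter.atTop (nhds (-Real.eulerMascheroniConstant)) := by
  have limit := tendsto_sum_div_sub_mul_log (c := 1) (g := fun s ↦ -logDeriv riemannZeta₁ s)
    (fun _ ↦ vonMangoldt_nonneg) sum_vonMangoldt_le
    (fun s hs ↦ by
      rw [LSeries_vonMangoldt_eq_one_div_sub_logDeriv hs, Complex.ofReal_one, sub_eq_add_neg])
    (fun s hs ↦ (differentiableAt_logDeriv_riemannZeta₁ hs).neg.continuousAt.continuousWithinAt)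
    (differentiableAt_logDeriv_riemannZeta₁ le_rfl).neg
  simpa only [logDeriv_riemannZeta₁_one, Complex.neg_re, Complex.ofReal_re, one_mul,
    ← Nat.range_succ_eq_Icc_zero] using limit
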